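/- The marginal probability that a fixed edge e appears in a spanning tree drawn from the w-uniform distribution on spanning trees of a connected weighted graph G equals its leverage score l_e = w_e · R_eff(u,v), where e = (u,v). -/

import Mathlib

open Matrix

/-- `B` is the Moore–Penrose pseudoinverse of `A`. -/
def IsMoorePenrose {n : Type*} [Fintype n] [DecidableEq n] (A B : Matrix n n ℝ) : Prop :=
  A * B * A = A ∧ B * A * B = B ∧ (A * B)ᵀ = A * B ∧ (B * A)ᵀ = B * A

/-!
Kirchhoff's argument. For a vertex `x` let `φ x` be the total weight of the two-component spanning
forests in which `v` is separated from both `u` and `x`. Adding the edge `xy` is a bijection from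
the two-component forests that separate `x` from `y` onto the spanning trees through `xy`. It turns
`w_{xy} (φ x - φ y)` into the sum over those trees `T` of the weight of `T` times the current
through `xy` when `T` carries a unit current from `u` to `v`. Current is conserved in each `T`, so
`L φ = τ (δ_u - δ_v)`, where `τ` is the total weight of the spanning trees. Hence
`τ R_eff(u, v) = φ u - φ v = φ u`, and by the same bijection `w_{uv} φ u` is the total weight of the
spanning trees through `uv`.
-/

section Graph

open SimpleGraph

variable {V : Type*} {G : SimpleGraph V}

theorem reachable_sup_edge_iff {a b z : V} :
    (G ⊔ edge a b).Reachable a z ↔ G.Reachable a z ∨ G.Reachable b z := by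
  constructor
  · intro h
    rw [reachable_iff_reflTransGen] at h
    induction h with
    | refl => exact .inl .rfl
    | tail _ hadj ih =>
      rw [sup_adj, edge_adj] at hadj
      obtain hadj | ⟨⟨rfl, rfl⟩ | ⟨rfl, rfl⟩, -⟩ := hadj
      · exact ih.imp (·.trans hadj.reachable) (·.trans hadj.reachable)
      · exact .inr .rfl
      · exact .inl .rfl
  · have hab : (G ⊔ edge a b).Reachable a b := by
      obtain rfl | hne := eq_or_ne a b
      · exact .rfl
      · exact Adj.reachable (by simp [edge_adj, hne])
    rintro (h | h)
    · exact h.mono le_sup_left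
    · exact hab.trans (h.mono le_sup_left)

theorem connected_sup_edge_iff {a b : V} :
    (G ⊔ edge a b).Connected ↔ ∀ z, G.Reachable a z ∨ G.Reachable b z := by
  simp only [← reachable_sup_edge_iff]
  exact ⟨fun h => h.preconnected a, fun h => (connected_iff_exists_forall_reachable _).2 ⟨a, h⟩⟩

theorem card_connectedComponent_eq_two_iff {a b : V} (hab : ¬ G.Reachable a b) :
    Nat.card G.ConnectedComponent = 2 ↔ ∀ z, G.Reachable a z ∨ G.Reachable b z := by
  have hne : G.connectedComponentMk b ≠ G.connectedComponentMk a :=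
    fun h => hab (ConnectedComponent.exact h).symm
  rw [Nat.card_eq_two_iff' (G.connectedComponentMk a)]
  constructor
  · intro h z
    by_cases hz : G.connectedComponentMk z = G.connectedComponentMk a
    · exact .inl (ConnectedComponent.exact hz).symm
    · exact .inr (ConnectedComponent.exact (h.unique hne hz))
  · refine fun h => ⟨_, hne, fun c => c.ind fun z hz => ?_⟩
    exact ConnectedComponent.sound ((h z).resolve_left fun haz =>
      hz (ConnectedComponent.sound haz.symm)).symm

/-- A spanning forest with exactly two components. -/
def IsTwoForest (G : SimpleGraph V) : Prop :=
  G.IsAcyclic ∧ Nat.card G.ConnectedComponent = 2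

theorem isTree_sup_edge_iff_isTwoForest {a b : V} (hab : ¬ G.Reachable a b) :
    (G ⊔ edge a b).IsTree ↔ IsTwoForest G := by
  rw [isTree_iff, IsTwoForest, connected_sup_edge_iff, card_connectedComponent_eq_two_iff hab,
    isAcyclic_add_edge_iff_of_not_reachable a b hab, and_comm]

open scoped Classical in
theorem ite_reachable_sub_ite_reachable {R : Type*} [Ring R]
    (hG : Nat.card G.ConnectedComponent = 2) (u v x y : V) :
    (if ¬ G.Reachable u v then
      (if G.Reachable u x then 1 else 0) - (if G.Reachable u y then 1 else 0) else 0 : R) =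
    if ¬ G.Reachable x y then
      (if G.Reachable y v then 1 else 0) - (if G.Reachable y u then 1 else 0) else 0 := by
  obtain ⟨side, hside⟩ : ∃ side : V → Fin 2, ∀ p q, G.Reachable p q ↔ side p = side q := by
    have := Nat.finite_of_card_ne_zero (hG.trans_ne two_ne_zero)
    exact ⟨fun p => Finite.equivFinOfCardEq hG (G.connectedComponentMk p),
      fun p q => by simp [ConnectedComponent.eq]⟩
  simp only [hside]
  generalize side u = i, side v = j, side x = k, side y = l
  fin_cases i <;> fin_cases j <;> fin_cases k <;> fin_cases l <;> simp

theorem existsUnique_adj_reachable_deleteEdges (hG : G.IsTree) {x z : V} (hxz : x ≠ z) :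
    ∃! y, G.Adj x y ∧ (G.deleteEdges {s(x, y)}).Reachable y z := by
  classical
  obtain ⟨p, hp, -⟩ := hG.existsUnique_path x z
  cases p with
  | nil => exact absurd rfl hxz
  | @cons _ y _ hxy p =>
    have hxp := ((Walk.cons_isPath_iff _ _).1 hp).2
    refine ⟨y, ⟨hxy, reachable_deleteEdges_iff_exists_walk.2
      ⟨p, fun h => hxp (p.fst_mem_support_of_mem_edges h)⟩⟩, fun y' ⟨hxy', hr⟩ => ?_⟩
    obtain ⟨q, hq⟩ := hr.exists_isPath
    have hxq : x ∉ q.support := fun hx =>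
      isAcyclic_iff_forall_adj_isBridge.1 hG.isAcyclic hxy' ⟨(q.takeUntil x hx).reverse⟩
    have hcons : (Walk.cons hxy' (q.mapLe (deleteEdges_le _))).IsPath :=
      (Walk.cons_isPath_iff _ _).2 ⟨hq.mapLe _, by simpa using hxq⟩
    simpa using congrArg Walk.snd ((hG.existsUnique_path x z).unique hcons hp)

theorem sum_ite_reachable_deleteEdges {R : Type*} [NonAssocSemiring R] [Fintype V] [DecidableEq V]
    [DecidableRel G.Adj] {x z : V} {_ : ∀ y, Decidable ((G.deleteEdges {s(x, y)}).Reachable y z)}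
    (hG : G.IsTree) :
    ∑ y with G.Adj x y, (if (G.deleteEdges {s(x, y)}).Reachable y z then 1 else 0 : R) =
      if x = z then 0 else 1 := by
  split_ifs with hxz
  · subst hxz
    refine Finset.sum_eq_zero fun y hy => if_neg fun hr => ?_
    exact isAcyclic_iff_forall_adj_isBridge.1 hG.isAcyclic (Finset.mem_filter.1 hy).2 hr.symm
  · obtain ⟨y, ⟨hxy, hr⟩, huniq⟩ := existsUnique_adj_reachable_deleteEdges hG hxz
    rw [Finset.sum_eq_single_of_mem y (by simpa using hxy), if_pos hr]
    exact fun y' hy' hne => if_neg fun hr' => hne (huniq y' ⟨(Finset.mem_filter.1 hy').2, hr'⟩)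

open scoped Classical in
/-- The unit current from `u` to `v` in a tree `G`, through the edge `xy` in the direction from `x`
to `y`: it is `1` or `-1` if the path from `u` to `v` traverses `xy` from `x` to `y` or from `y` to
`x`, and `0` otherwise. It is read off from the side of `xy` on which `u` and `v` lie. -/
noncomputable def treeCurrent (R : Type*) [Ring R] (G : SimpleGraph V) (u v x y : V) : R :=
  (if (G.deleteEdges {s(x, y)}).Reachable y v then 1 else 0) -
    if (G.deleteEdges {s(x, y)}).Reachable y u then 1 else 0

theorem sum_treeCurrent {R : Type*} [Ring R] [Fintype V] [DecidableEq V] [DecidableRel G.Adj]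
    (hG : G.IsTree) (u v x : V) :
    ∑ y with G.Adj x y, treeCurrent R G u v x y =
      (Pi.single u 1 - Pi.single v 1 : V → R) x := by
  simp only [treeCurrent, Finset.sum_sub_distrib, Pi.sub_apply, Pi.single_apply]
  refine (congrArg₂ (· - ·) (sum_ite_reachable_deleteEdges hG)
    (sum_ite_reachable_deleteEdges hG)).trans ?_
  split_ifs <;> simp

end Graph

section EdgeSet

open SimpleGraph

variable {V R : Type*}

/-- The graph on `V` with edge set `S`. -/
abbrev edgeGraph (S : Finset (Sym2 V)) : SimpleGraph V := fromEdgeSet (S : Set (Sym2 V))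

theorem edgeGraph_erase [DecidableEq V] (S : Finset (Sym2 V)) (e : Sym2 V) :
    edgeGraph (S.erase e) = (edgeGraph S).deleteEdges {e} := by
  simp [edgeGraph]

theorem edgeGraph_insert [DecidableEq V] (S : Finset (Sym2 V)) (a b : V) :
    edgeGraph (insert s(a, b) S) = edgeGraph S ⊔ edge a b := by
  simp [edgeGraph, edge, ← Set.union_singleton, fromEdgeSet_union]

open scoped Classical in
/-- The spanning trees of the graph with edge set `E`, each given by its set of edges. -/
noncomputable def spanningTrees (E : Finset (Sym2 V)) : Finset (Finset (Sym2 V)) :=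
  {T ∈ E.powerset | (edgeGraph T).IsTree}

open scoped Classical in
/-- The two-component spanning forests of the graph with edge set `E` in which `a` and `b` lie in
different components, each given by its set of edges. -/
noncomputable def separatingForests (E : Finset (Sym2 V)) (a b : V) : Finset (Finset (Sym2 V)) :=
  {S ∈ E.powerset | IsTwoForest (edgeGraph S) ∧ ¬ (edgeGraph S).Reachable a b}

theorem insert_mem_spanningTrees [DecidableEq V] {E S : Finset (Sym2 V)} {a b : V}
    (he : s(a, b) ∈ E) (hS : S ∈ separatingForests E a b) :
    insert s(a, b) S ∈ spanningTrees E := by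
  simp only [separatingForests, spanningTrees, Finset.mem_filter, Finset.mem_powerset] at hS ⊢
  obtain ⟨hSE, hforest, hsep⟩ := hS
  exact ⟨Finset.insert_subset he hSE,
    edgeGraph_insert S a b ▸ (isTree_sup_edge_iff_isTwoForest hsep).2 hforest⟩

theorem notMem_of_mem_separatingForests {E S : Finset (Sym2 V)} {a b : V} (hab : a ≠ b)
    (hS : S ∈ separatingForests E a b) : s(a, b) ∉ S := by
  simp only [separatingForests, Finset.mem_filter] at hS
  exact fun h => hS.2.2 (Adj.reachable ((fromEdgeSet_adj _).2 ⟨h, hab⟩))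

theorem erase_mem_separatingForests [DecidableEq V] {E T : Finset (Sym2 V)} {a b : V}
    (hab : a ≠ b) (hT : T ∈ spanningTrees E) (he : s(a, b) ∈ T) :
    T.erase s(a, b) ∈ separatingForests E a b := by
  simp only [separatingForests, spanningTrees, Finset.mem_filter, Finset.mem_powerset] at hT ⊢
  obtain ⟨hTE, htree⟩ := hT
  have hsep : ¬ (edgeGraph (T.erase s(a, b))).Reachable a b := by
    rw [edgeGraph_erase]
    exact isAcyclic_iff_forall_adj_isBridge.1 htree.isAcyclic ((fromEdgeSet_adj _).2 ⟨he, hab⟩)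
  rw [← Finset.insert_erase he, edgeGraph_insert, isTree_sup_edge_iff_isTwoForest hsep] at htree
  exact ⟨(Finset.erase_subset _ _).trans hTE, htree, hsep⟩

theorem mul_sum_separatingForests [CommSemiring R] [DecidableEq V] {E : Finset (Sym2 V)}
    {a b : V} (hab : a ≠ b) (he : s(a, b) ∈ E) (w : Sym2 V → R) (f : Finset (Sym2 V) → R) :
    w s(a, b) * ∑ S ∈ separatingForests E a b, (∏ e ∈ S, w e) * f S =
      ∑ T ∈ spanningTrees E with s(a, b) ∈ T, (∏ e ∈ T, w e) * f (T.erase s(a, b)) := by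
  rw [Finset.mul_sum]
  refine Finset.sum_bij' (fun S _ => insert s(a, b) S) (fun T _ => T.erase s(a, b))
    (fun S hS => Finset.mem_filter.2 ⟨insert_mem_spanningTrees he hS, Finset.mem_insert_self _ _⟩)
    (fun T hT => ?_)
    (fun S hS => Finset.erase_insert (notMem_of_mem_separatingForests hab hS))
    (fun T hT => Finset.insert_erase (Finset.mem_filter.1 hT).2) (fun S hS => ?_)
  · obtain ⟨htree, heT⟩ := Finset.mem_filter.1 hT
    exact erase_mem_separatingForests hab htree heT
  · have heS := notMem_of_mem_separatingForests hab hS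
    rw [Finset.erase_insert heS, Finset.prod_insert heS, mul_assoc]

theorem spanningTrees_nonempty {E : Finset (Sym2 V)} (hE : (edgeGraph E).Connected) :
    (spanningTrees E).Nonempty := by
  classical
  obtain ⟨G, hGE, hG⟩ := hE.exists_isTree_le
  have hsub : G.edgeSet ⊆ E :=
    (edgeSet_mono hGE).trans ((edgeSet_fromEdgeSet _).trans_subset Set.sdiff_subset)
  lift G.edgeSet to Finset (Sym2 V) using E.finite_toSet.subset hsub with T hT
  refine ⟨T, Finset.mem_filter.2 ⟨Finset.mem_powerset.2 (Finset.coe_subset.1 hsub), ?_⟩⟩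
  rwa [edgeGraph, hT, fromEdgeSet_edgeSet]

theorem sum_spanningTrees_pos [CommSemiring R] [PartialOrder R] [IsStrictOrderedRing R]
    {E : Finset (Sym2 V)} {w : Sym2 V → R} (hw : ∀ e ∈ E, 0 < w e)
    (hE : (edgeGraph E).Connected) : 0 < ∑ T ∈ spanningTrees E, ∏ e ∈ T, w e := by
  classical
  exact Finset.sum_pos (fun _ hT => Finset.prod_pos fun e he =>
    hw e (Finset.mem_powerset.1 (Finset.mem_filter.1 hT).1 he)) (spanningTrees_nonempty hE)

end EdgeSet

section Potential

open SimpleGraph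

variable {V R : Type*} [CommRing R]

open scoped Classical in
/-- Kirchhoff's potential for a current from `u` to `v`, scaled by the total weight of the spanning
trees so that no division occurs. -/
noncomputable def kirchhoffPotential (E : Finset (Sym2 V)) (w : Sym2 V → R) (u v x : V) : R :=
  ∑ S ∈ separatingForests E u v with (edgeGraph S).Reachable u x, ∏ e ∈ S, w e

theorem kirchhoffPotential_self_right (E : Finset (Sym2 V)) (w : Sym2 V → R) (u v : V) :
    kirchhoffPotential E w u v v = 0 := by
  classical
  refine (congrArg (Finset.sum · _) (Finset.filter_eq_empty_iff.2 fun S hS => ?_)).trans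
    Finset.sum_empty
  exact (Finset.mem_filter.1 hS).2.2

theorem mul_kirchhoffPotential_self_left [DecidableEq V] {E : Finset (Sym2 V)} {u v : V}
    (huv : u ≠ v) (he : s(u, v) ∈ E) (w : Sym2 V → R) :
    w s(u, v) * kirchhoffPotential E w u v u =
      ∑ T ∈ spanningTrees E with s(u, v) ∈ T, ∏ e ∈ T, w e := by
  simpa [kirchhoffPotential] using mul_sum_separatingForests huv he w 1

open scoped Classical in
theorem kirchhoffPotential_sub (E : Finset (Sym2 V)) (w : Sym2 V → R) (u v x y : V) :
    kirchhoffPotential E w u v x - kirchhoffPotential E w u v y =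
      ∑ S ∈ separatingForests E x y, (∏ e ∈ S, w e) *
        ((if (edgeGraph S).Reachable y v then 1 else 0) -
          if (edgeGraph S).Reachable y u then 1 else 0) := by
  simp only [kirchhoffPotential, separatingForests, Finset.sum_filter, ← Finset.sum_sub_distrib]
  refine Finset.sum_congr rfl fun S _ => ?_
  by_cases hS : IsTwoForest (edgeGraph S)
  · have hexchange := congrArg ((∏ e ∈ S, w e) * ·)
      (ite_reachable_sub_ite_reachable (R := R) hS.2 u v x y)
    simpa [hS, mul_sub, mul_ite, ite_sub_ite] using hexchange
  · simp [hS]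

theorem mul_kirchhoffPotential_sub [DecidableEq V] {E : Finset (Sym2 V)} {x y : V}
    (hxy : (edgeGraph E).Adj x y) (w : Sym2 V → R) (u v : V) :
    w s(x, y) * (kirchhoffPotential E w u v x - kirchhoffPotential E w u v y) =
      ∑ T ∈ spanningTrees E with s(x, y) ∈ T,
        (∏ e ∈ T, w e) * treeCurrent R (edgeGraph T) u v x y := by
  classical
  obtain ⟨he, hne⟩ := (fromEdgeSet_adj _).1 hxy
  rw [kirchhoffPotential_sub, mul_sum_separatingForests hne he]
  simp only [edgeGraph_erase, treeCurrent]

theorem sum_mul_kirchhoffPotential_sub [Fintype V] [DecidableEq V] (E : Finset (Sym2 V))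
    (w : Sym2 V → R) (u v x : V) :
    ∑ y with (edgeGraph E).Adj x y,
        w s(x, y) * (kirchhoffPotential E w u v x - kirchhoffPotential E w u v y) =
      (∑ T ∈ spanningTrees E, ∏ e ∈ T, w e) * (Pi.single u 1 - Pi.single v 1 : V → R) x := by
  classical
  calc
    _ = ∑ y with (edgeGraph E).Adj x y, ∑ T ∈ spanningTrees E with s(x, y) ∈ T,
          (∏ e ∈ T, w e) * treeCurrent R (edgeGraph T) u v x y :=
      Finset.sum_congr rfl fun y hy =>
        mul_kirchhoffPotential_sub (Finset.mem_filter.1 hy).2 w u v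
    _ = ∑ T ∈ spanningTrees E, ∑ y with (edgeGraph T).Adj x y,
          (∏ e ∈ T, w e) * treeCurrent R (edgeGraph T) u v x y := by
      refine Finset.sum_comm' fun y T => ?_
      simp only [spanningTrees, Finset.mem_filter, Finset.mem_univ, true_and, Finset.mem_powerset,
        fromEdgeSet_adj, Finset.mem_coe]
      grind
    _ = _ := by
      rw [Finset.sum_mul]
      refine Finset.sum_congr rfl fun T hT => ?_
      rw [← Finset.mul_sum, sum_treeCurrent (Finset.mem_filter.1 hT).2]

end Potential

section Laplacian

variable {V R : Type*}

theorem mulVec_dotProduct_mulVec_mulVec [Fintype V] [CommSemiring R] {A B : Matrix V V R}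
    (hA : A.IsSymm) (hB : A * B * A = A) (f : V → R) :
    (A *ᵥ f) ⬝ᵥ B *ᵥ (A *ᵥ f) = (A *ᵥ f) ⬝ᵥ f := by
  calc
    (A *ᵥ f) ⬝ᵥ B *ᵥ (A *ᵥ f) = f ⬝ᵥ (A * B * A) *ᵥ f := by
      rw [mulVec_mulVec, ← vecMul_transpose A, hA.eq, ← dotProduct_mulVec, mulVec_mulVec,
        Matrix.mul_assoc]
    _ = (A *ᵥ f) ⬝ᵥ f := by rw [hB, dotProduct_comm]

variable [DecidableEq V] [CommRing R]

/-- The Laplacian matrix of the graph with edge set `E` and edge weights `w`. -/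
def weightedLaplacian (E : Finset (Sym2 V)) (w : Sym2 V → R) : Matrix V V R :=
  Matrix.of fun i j =>
    if i = j then ∑ e ∈ E.filter (fun e => i ∈ e), w e
    else if s(i, j) ∈ E then - w s(i, j) else 0

theorem isSymm_weightedLaplacian (E : Finset (Sym2 V)) (w : Sym2 V → R) :
    (weightedLaplacian E w).IsSymm := by
  ext i j
  obtain rfl | hij := eq_or_ne i j
  · rfl
  · simp [weightedLaplacian, hij, hij.symm, Sym2.eq_swap (a := i)]

/-- The vector `δ_u - δ_v` for `u ≠ v`; for `u = v` it is `δ_u`, not `0`. -/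
def dipole (u v : V) : V → R := fun i => if i = u then 1 else if i = v then -1 else 0

theorem dipole_eq_single_sub_single {u v : V} (huv : u ≠ v) :
    dipole u v = (Pi.single u 1 - Pi.single v 1 : V → R) := by
  ext i
  simp only [dipole, Pi.sub_apply, Pi.single_apply]
  split_ifs <;> simp_all

variable [Fintype V]

theorem sum_incident_eq_sum_adj {E : Finset (Sym2 V)} (hloop : ∀ e ∈ E, ¬ e.IsDiag)
    (w : Sym2 V → R) (x : V) :
    ∑ e ∈ E with x ∈ e, w e = ∑ y with (edgeGraph E).Adj x y, w s(x, y) := by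
  symm
  refine Finset.sum_bij (fun y _ => s(x, y)) (fun y hy => ?_) (fun _ _ _ _ => Sym2.congr_right.1)
    (fun e he => ?_) (fun _ _ => rfl)
  · simp_all
  · obtain ⟨heE, hxe⟩ := Finset.mem_filter.1 he
    obtain ⟨y, rfl⟩ := Sym2.mem_iff_exists.1 hxe
    have hxy : x ≠ y := hloop _ heE
    exact ⟨y, by simp [heE, hxy], rfl⟩

theorem weightedLaplacian_mulVec {E : Finset (Sym2 V)} (hloop : ∀ e ∈ E, ¬ e.IsDiag)
    (w : Sym2 V → R) (f : V → R) (x : V) :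
    (weightedLaplacian E w *ᵥ f) x =
      ∑ y with (edgeGraph E).Adj x y, w s(x, y) * (f x - f y) := by
  have hentry (y : V) : weightedLaplacian E w x y * f y =
      (if x = y then (∑ z with (edgeGraph E).Adj x z, w s(x, z)) * f x else 0) -
        if (edgeGraph E).Adj x y then w s(x, y) * f y else 0 := by
    rw [weightedLaplacian, Matrix.of_apply, sum_incident_eq_sum_adj hloop]
    obtain rfl | hxy := eq_or_ne x y
    · simp
    · simp [hxy, ite_mul, neg_mul, neg_ite]
  simp only [mulVec, dotProduct, hentry, Finset.sum_sub_distrib, mul_sub, Finset.sum_ite_eq,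
    Finset.mem_univ, if_true, ← Finset.sum_filter, Finset.sum_mul]

theorem weightedLaplacian_mulVec_kirchhoffPotential {E : Finset (Sym2 V)}
    (hloop : ∀ e ∈ E, ¬ e.IsDiag) (w : Sym2 V → R) (u v : V) :
    weightedLaplacian E w *ᵥ kirchhoffPotential E w u v =
      (∑ T ∈ spanningTrees E, ∏ e ∈ T, w e) • (Pi.single u 1 - Pi.single v 1) := by
  ext x
  rw [weightedLaplacian_mulVec hloop, sum_mul_kirchhoffPotential_sub, Pi.smul_apply, smul_eq_mul]

theorem mul_dipole_dotProduct_mulVec_dipole {E : Finset (Sym2 V)}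
    (hloop : ∀ e ∈ E, ¬ e.IsDiag) {w : Sym2 V → R} {u v : V} (huv : u ≠ v)
    {Lp : Matrix V V R} (hLp : weightedLaplacian E w * Lp * weightedLaplacian E w =
      weightedLaplacian E w)
    (hτ : IsLeftRegular (∑ T ∈ spanningTrees E, ∏ e ∈ T, w e)) :
    (∑ T ∈ spanningTrees E, ∏ e ∈ T, w e) * (dipole u v ⬝ᵥ Lp *ᵥ dipole u v) =
      kirchhoffPotential E w u v u := by
  set τ := ∑ T ∈ spanningTrees E, ∏ e ∈ T, w e
  have hLφ : weightedLaplacian E w *ᵥ kirchhoffPotential E w u v = τ • dipole u v := by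
    rw [dipole_eq_single_sub_single huv, weightedLaplacian_mulVec_kirchhoffPotential hloop]
  have henergy : τ * (τ * (dipole u v ⬝ᵥ Lp *ᵥ dipole u v)) =
      τ * (dipole u v ⬝ᵥ kirchhoffPotential E w u v) := by
    simpa [hLφ, mulVec_smul] using mulVec_dotProduct_mulVec_mulVec
      (isSymm_weightedLaplacian E w) hLp (kirchhoffPotential E w u v)
  calc
    _ = dipole u v ⬝ᵥ kirchhoffPotential E w u v := hτ henergy
    _ = kirchhoffPotential E w u v u - kirchhoffPotential E w u v v := by
      simp [dipole_eq_single_sub_single huv, sub_dotProduct]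
    _ = _ := by rw [kirchhoffPotential_self_right, sub_zero]

theorem stmt16_general {E : Finset (Sym2 V)} (hloop : ∀ e ∈ E, ¬ e.IsDiag) {w : Sym2 V → R}
    (hτ : IsLeftRegular (∑ T ∈ spanningTrees E, ∏ e ∈ T, w e))
    {u v : V} (he : s(u, v) ∈ E) {Lp : Matrix V V R}
    (hLp : weightedLaplacian E w * Lp * weightedLaplacian E w = weightedLaplacian E w) :
    ∑ T ∈ spanningTrees E with s(u, v) ∈ T, ∏ e ∈ T, w e =
      w s(u, v) * (dipole u v ⬝ᵥ Lp *ᵥ dipole u v) *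
        ∑ T ∈ spanningTrees E, ∏ e ∈ T, w e := by
  have huv : u ≠ v := hloop _ he
  rw [← mul_kirchhoffPotential_self_left huv he,
    ← mul_dipole_dotProduct_mulVec_dipole hloop huv hLp hτ]
  ring

end Laplacian

theorem stmt16 {V : Type*} [Fintype V] [DecidableEq V]
    (E : Finset (Sym2 V)) (w : Sym2 V → ℝ)
    (hloop : ∀ e ∈ E, ¬ e.IsDiag) (hw : ∀ e ∈ E, 0 < w e)
    (hconn : (SimpleGraph.fromEdgeSet (↑E : Set (Sym2 V))).Connected)
    (u v : V) (huv : u ≠ v) (he : s(u, v) ∈ E)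
    (L : Matrix V V ℝ)
    (hL : L = Matrix.of fun i j =>
      if i = j then ∑ e ∈ E.filter (fun e => i ∈ e), w e
      else if s(i, j) ∈ E then - w s(i, j) else 0)
    (Lp : Matrix V V ℝ) (hLp : IsMoorePenrose L Lp)
    (b : V → ℝ) (hb : b = fun i => if i = u then 1 else if i = v then -1 else 0) :
    -- the total weight of spanning trees containing the edge {u,v} equals the
    -- leverage score w_e · R_eff(u,v) times the total weight of all spanning trees
    (∑ T ∈ @Finset.filter _
        (fun T : Finset (Sym2 V) => (SimpleGraph.fromEdgeSet (↑T : Set (Sym2 V))).IsTree ∧ s(u, v) ∈ T)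
        (Classical.decPred _) E.powerset, ∏ e ∈ T, w e) =
      (w s(u, v) * (b ⬝ᵥ Lp *ᵥ b)) *
        ∑ T ∈ @Finset.filter _
          (fun T : Finset (Sym2 V) => (SimpleGraph.fromEdgeSet (↑T : Set (Sym2 V))).IsTree)
          (Classical.decPred _) E.powerset, ∏ e ∈ T, w e := by
  subst hL hb
  have hτ := (IsRegular.of_ne_zero (sum_spanningTrees_pos hw hconn).ne').left
  exact (Finset.sum_congr (by ext; simp [spanningTrees, and_assoc]) fun _ _ => rfl).trans
    (stmt16_general hloop hτ he hLp.1)
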